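/- Let h₁ ≤ 0 and h₂ ≤ 0 be real numbers. Then sup{h₁x + h₂y : x > 0, y > 0, xy = x + y} = −(√(−h₁) + √(−h₂))². Moreover, if h₁ < 0 and h₂ < 0, this supremum is attained at (x, y) = (√(h₂/h₁) + 1, √(h₁/h₂) + 1), and equals h₁ + h₂ − 2√(h₁h₂). (In the language of antinorms: for the antinorm α(x, y) = xy/(x + y) on the quadrant C = {(x, y) : x ≥ 0, y ≥ 0}, the dual function satisfies α^∨(h₁, h₂) = (√(−h₁) + √(−h₂))² for (h₁, h₂) in the negative dual cone C^∨ = {(h₁, h₂) : h₁ ≤ 0, h₂ ≤ 0}.) -/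

import Mathlib

open Set

variable {V : Type*} [NormedAddCommGroup V] [NormedSpace ℝ V]

/-- `C` is a closed convex cone (containing the origin). -/
def IsClosedConvexCone (C : Set V) : Prop :=
  (0 : V) ∈ C ∧ IsClosed C ∧ Convex ℝ C ∧ ∀ c : ℝ, 0 < c → ∀ x ∈ C, c • x ∈ C

/-- A cone is salient if it contains no nonzero linear subspace,
equivalently it contains no pair `x, -x` with `x ≠ 0`. -/
def IsSalientCone (C : Set V) : Prop := ∀ x ∈ C, x ≠ 0 → -x ∉ C

/-- The relative boundary of a set: the set minus its relative (intrinsic) interior. -/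
def relBoundary (C : Set V) : Set V := C \ intrinsicInterior ℝ C

/-- `a` is an antinorm associated with the cone `C` : it takes values in `ℝ ∪ {-∞}`,
is positive on the relative interior of `C`, vanishes on the relative boundary of `C`,
is `-∞` off `C`, is positively homogeneous and superadditive (concave). -/
def IsAntinorm (C : Set V) (a : V → EReal) : Prop :=
  (∀ v, a v ≠ ⊤) ∧
  (∀ v ∈ intrinsicInterior ℝ C, 0 < a v) ∧
  (∀ v ∈ relBoundary C, a v = 0) ∧
  (∀ v, v ∉ C → a v = ⊥) ∧
  (∀ c : ℝ, 0 < c → ∀ v, a (c • v) = (c : EReal) * a v) ∧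
  (∀ v w, a v + a w ≤ a (v + w))

/-- The negative dual cone `C^∨ = {p : ⟨p,u⟩ ≤ 0 ∀ u ∈ C}`. -/
def negDual (C : Set V) : Set (V →L[ℝ] ℝ) := {p | ∀ u ∈ C, p u ≤ 0}

/-- The antisphere of radius `r`. -/
def antisphere (a : V → EReal) (r : ℝ) : Set V := {v | a v = (r : EReal)}

/-- The dual function `α^∨(p) = -sup_{v ∈ S₁} ⟨p, v⟩`. -/
noncomputable def dualFn (a : V → EReal) (p : V →L[ℝ] ℝ) : EReal :=
  - sSup ((fun v => ((p v : ℝ) : EReal)) '' antisphere a 1)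

/-- `p^∨_r` : the set of maximizers of `v ↦ ⟨p, v⟩` over the antisphere `S_r`. -/
def maxSet (a : V → EReal) (p : V →L[ℝ] ℝ) (r : ℝ) : Set V :=
  {v ∈ antisphere a r | ∀ w ∈ antisphere a r, p w ≤ p v}

/-- `p^∨ = ⋃_{r ≥ 0} p^∨_r`. -/
def pDual (a : V → EReal) (p : V →L[ℝ] ℝ) : Set V := ⋃ r ∈ Ici (0 : ℝ), maxSet a p r

/-!
Put `a = √(-h₁)` and `b = √(-h₂)`. The constraint `xy = x + y` reads `x⁻¹ + y⁻¹ = 1`, so the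
Cauchy–Schwarz inequality in Sedrakyan's form gives
`a² x + b² y = a² / x⁻¹ + b² / y⁻¹ ≥ (a + b)²`, with equality at `((a + b) / a, (a + b) / b)`.
If `a` or `b` vanishes this point escapes to infinity, and the bound is approached along the points
belonging to `a + e` and `b + e` as `e → 0`. The same argument works in any number of variables.
-/

/-- The unit antisphere of the harmonic antinorm `x ↦ (∑ i, (x i)⁻¹)⁻¹` on the positive orthant of
`ι → K`, written as `∑ i, (x i)⁻¹ = 1`. In two coordinates the antinorm is `x * y / (x + y)`. -/
def harmonicAntisphere (ι K : Type*) [Fintype ι] [Field K] [LinearOrder K] : Set (ι → K) :=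
  {x | (∀ i, 0 < x i) ∧ ∑ i, (x i)⁻¹ = 1}

theorem sum_sq_mul_sum_div_self {ι K : Type*} [Fintype ι] [Field K] (a : ι → K) :
    ∑ i, a i ^ 2 * ((∑ j, a j) / a i) = (∑ i, a i) ^ 2 := by
  rw [sq (∑ i, a i), Finset.sum_mul]
  refine Finset.sum_congr rfl fun i _ ↦ ?_
  rw [← mul_div_assoc, mul_div_right_comm, sq, mul_self_div_self]

theorem sqrt_div_add_one_of_neg {h₁ : ℝ} (hh₁ : h₁ < 0) (h₂ : ℝ) :
    √(h₂ / h₁) + 1 = (√(-h₂) + √(-h₁)) / √(-h₁) := by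
  rw [← neg_div_neg_eq, Real.sqrt_div' _ (neg_nonneg.2 hh₁.le), add_div,
    div_self (Real.sqrt_ne_zero'.2 (neg_pos.2 hh₁))]

theorem neg_sq_sqrt_neg_add_sqrt_neg {h₁ h₂ : ℝ} (hh₁ : h₁ ≤ 0) (hh₂ : h₂ ≤ 0) :
    -(√(-h₁) + √(-h₂)) ^ 2 = h₁ + h₂ - 2 * √(h₁ * h₂) := by
  rw [add_sq, Real.sq_sqrt (neg_nonneg.2 hh₁), Real.sq_sqrt (neg_nonneg.2 hh₂), mul_assoc,
    ← Real.sqrt_mul (neg_nonneg.2 hh₁), neg_mul_neg]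
  ring

theorem sum_sq_mul_sum_div_le {ι K : Type*} [Fintype ι] [Field K] [LinearOrder K]
    [IsStrictOrderedRing K] {a b : ι → K} (ha : ∀ i, 0 ≤ a i) (hab : ∀ i, a i ≤ b i) :
    ∑ i, a i ^ 2 * ((∑ j, b j) / b i) ≤ (∑ i, a i) * ∑ i, b i := by
  have hb (i : ι) : 0 ≤ b i := (ha i).trans (hab i)
  rw [Finset.sum_mul]
  refine Finset.sum_le_sum fun i _ ↦ ?_
  have hterm : a i ^ 2 / b i ≤ a i :=
    div_le_of_le_mul₀ (hb i) (ha i) (sq (a i) ▸ mul_le_mul_of_nonneg_left (hab i) (ha i))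
  rw [← mul_div_assoc, mul_div_right_comm]
  exact mul_le_mul_of_nonneg_right hterm (Finset.sum_nonneg fun j _ ↦ hb j)

namespace harmonicAntisphere

section LinearOrderedField

variable {ι K : Type*} [Fintype ι] [Field K] [LinearOrder K] [IsStrictOrderedRing K]

theorem sum_div_mem [Nonempty ι] {b : ι → K} (hb : ∀ i, 0 < b i) :
    (fun i ↦ (∑ j, b j) / b i) ∈ harmonicAntisphere ι K := by
  have hsum : 0 < ∑ j, b j := Finset.sum_pos (fun i _ ↦ hb i) Finset.univ_nonempty
  refine ⟨fun i ↦ div_pos hsum (hb i), ?_⟩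
  simp only [inv_div, ← Finset.sum_div, div_self hsum.ne']

theorem sq_sum_le_sum_sq_mul {x : ι → K} (hx : x ∈ harmonicAntisphere ι K) (a : ι → K) :
    (∑ i, a i) ^ 2 ≤ ∑ i, a i ^ 2 * x i := by
  obtain ⟨hpos, hinv⟩ := hx
  simpa only [hinv, div_one, div_inv_eq_mul] using
    Finset.sq_sum_div_le_sum_sq_div Finset.univ a fun i _ ↦ inv_pos.2 (hpos i)

theorem isGLB_sum_sq_mul [Nonempty ι] {a : ι → K} (ha : ∀ i, 0 ≤ a i) :
    IsGLB ((fun x ↦ ∑ i, a i ^ 2 * x i) '' harmonicAntisphere ι K) ((∑ i, a i) ^ 2) := by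
  refine ⟨forall_mem_image.2 fun x hx ↦ sq_sum_le_sum_sq_mul hx a, fun m hm ↦ ?_⟩
  have le_perturbed (e : K) (he : 0 < e) : m ≤ (∑ i, a i) * ∑ i, (a i + e) :=
    (hm (mem_image_of_mem _ (sum_div_mem fun i ↦ add_pos_of_nonneg_of_pos (ha i) he))).trans
      (sum_sq_mul_sum_div_le ha fun i ↦ le_add_of_nonneg_right he.le)
  set c : K := (∑ i, a i) * Fintype.card ι
  have hc : 0 < c + 1 :=
    add_pos_of_nonneg_of_pos
      (mul_nonneg (Finset.sum_nonneg fun i _ ↦ ha i) (Nat.cast_nonneg _)) one_pos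
  refine le_of_forall_pos_le_add fun ε hε ↦ ?_
  calc m ≤ (∑ i, a i) * ∑ i, (a i + ε / (c + 1)) := le_perturbed _ (div_pos hε hc)
    _ = (∑ i, a i) ^ 2 + c * (ε / (c + 1)) := by
        rw [Finset.sum_add_distrib, Finset.sum_const, Finset.card_univ, nsmul_eq_mul]
        ring
    _ ≤ (∑ i, a i) ^ 2 + ε := by
        gcongr
        rw [mul_div_left_comm]
        exact mul_le_of_le_one_right hε.le ((div_le_one hc).2 (le_add_of_nonneg_right zero_le_one))

theorem mem_fin_two_iff {x : Fin 2 → K} :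
    x ∈ harmonicAntisphere (Fin 2) K ↔ 0 < x 0 ∧ 0 < x 1 ∧ x 0 * x 1 = x 0 + x 1 := by
  simp only [harmonicAntisphere, mem_ofPred_eq, Fin.forall_fin_two, Fin.sum_univ_two, and_assoc]
  refine and_congr_right fun h0 ↦ and_congr_right fun h1 ↦ ?_
  rw [inv_add_inv h0.ne' h1.ne', div_eq_one_iff_eq (mul_pos h0 h1).ne', eq_comm]

theorem image_linear_fin_two (p q : K) :
    (fun x ↦ p * x 0 + q * x 1) '' harmonicAntisphere (Fin 2) K =
      {z | ∃ x y, 0 < x ∧ 0 < y ∧ x * y = x + y ∧ z = p * x + q * y} := by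
  ext z
  constructor
  · rintro ⟨x, hx, rfl⟩
    obtain ⟨h0, h1, hmul⟩ := mem_fin_two_iff.1 hx
    exact ⟨x 0, x 1, h0, h1, hmul, rfl⟩
  · rintro ⟨x, y, hx, hy, hxy, rfl⟩
    exact ⟨![x, y], mem_fin_two_iff.2 ⟨hx, hy, hxy⟩, rfl⟩

end LinearOrderedField

variable {h₁ h₂ : ℝ}

theorem isLUB_linear_fin_two (hh₁ : h₁ ≤ 0) (hh₂ : h₂ ≤ 0) :
    IsLUB ((fun x ↦ h₁ * x 0 + h₂ * x 1) '' harmonicAntisphere (Fin 2) ℝ)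
      (-(√(-h₁) + √(-h₂)) ^ 2) := by
  have hGLB := isGLB_sum_sq_mul (a := ![√(-h₁), √(-h₂)])
    (Fin.forall_fin_two.2 ⟨Real.sqrt_nonneg _, Real.sqrt_nonneg _⟩)
  simp only [Fin.sum_univ_two, Matrix.cons_val_zero, Matrix.cons_val_one,
    Real.sq_sqrt (neg_nonneg.2 hh₁), Real.sq_sqrt (neg_nonneg.2 hh₂)] at hGLB
  have hLUB := hGLB.neg
  rw [← image_neg_eq_neg, image_image] at hLUB
  simpa only [neg_mul, neg_add, neg_neg] using hLUB

theorem vec_sqrt_div_add_one_mem (hh₁ : h₁ < 0) (hh₂ : h₂ < 0) :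
    ![√(h₂ / h₁) + 1, √(h₁ / h₂) + 1] ∈ harmonicAntisphere (Fin 2) ℝ := by
  have hmem := sum_div_mem (b := ![√(-h₁), √(-h₂)]) (Fin.forall_fin_two.2
    ⟨Real.sqrt_pos.2 (neg_pos.2 hh₁), Real.sqrt_pos.2 (neg_pos.2 hh₂)⟩)
  rw [sqrt_div_add_one_of_neg hh₁, sqrt_div_add_one_of_neg hh₂, add_comm √(-h₂)]
  convert hmem using 1
  ext i
  fin_cases i <;> simp [Fin.sum_univ_two]

theorem linear_sqrt_div_add_one (hh₁ : h₁ < 0) (hh₂ : h₂ < 0) :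
    h₁ * (√(h₂ / h₁) + 1) + h₂ * (√(h₁ / h₂) + 1) = -(√(-h₁) + √(-h₂)) ^ 2 := by
  have hvalue := sum_sq_mul_sum_div_self ![√(-h₁), √(-h₂)]
  simp only [Fin.sum_univ_two, Matrix.cons_val_zero, Matrix.cons_val_one,
    Real.sq_sqrt (neg_nonneg.2 hh₁.le), Real.sq_sqrt (neg_nonneg.2 hh₂.le)] at hvalue
  rw [sqrt_div_add_one_of_neg hh₁, sqrt_div_add_one_of_neg hh₂, add_comm √(-h₂)]
  linarith

end harmonicAntisphere

/-- For `h₁ ≤ 0`, `h₂ ≤ 0`,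
`sup {h₁ x + h₂ y : x > 0, y > 0, xy = x + y} = -(√(-h₁) + √(-h₂))²`, i.e. the dual
function of the antinorm `α(x,y) = xy/(x+y)` on the quadrant is
`α^∨(h₁,h₂) = (√(-h₁) + √(-h₂))²` on the negative dual cone. Moreover for `h₁ < 0`,
`h₂ < 0` the supremum is attained at `(√(h₂/h₁) + 1, √(h₁/h₂) + 1)` and equals
`h₁ + h₂ - 2√(h₁h₂)`. -/
theorem statement14 (h₁ h₂ : ℝ) (hh₁ : h₁ ≤ 0) (hh₂ : h₂ ≤ 0) :
    sSup {z : ℝ | ∃ x y : ℝ, 0 < x ∧ 0 < y ∧ x * y = x + y ∧ z = h₁ * x + h₂ * y}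
      = -(Real.sqrt (-h₁) + Real.sqrt (-h₂)) ^ 2 ∧
    (h₁ < 0 → h₂ < 0 →
      (0 < Real.sqrt (h₂ / h₁) + 1 ∧ 0 < Real.sqrt (h₁ / h₂) + 1 ∧
        (Real.sqrt (h₂ / h₁) + 1) * (Real.sqrt (h₁ / h₂) + 1)
          = (Real.sqrt (h₂ / h₁) + 1) + (Real.sqrt (h₁ / h₂) + 1) ∧
        h₁ * (Real.sqrt (h₂ / h₁) + 1) + h₂ * (Real.sqrt (h₁ / h₂) + 1)
          = -(Real.sqrt (-h₁) + Real.sqrt (-h₂)) ^ 2) ∧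
      -(Real.sqrt (-h₁) + Real.sqrt (-h₂)) ^ 2 = h₁ + h₂ - 2 * Real.sqrt (h₁ * h₂)) := by
  refine ⟨?_, fun h₁_neg h₂_neg ↦ ⟨?_, neg_sq_sqrt_neg_add_sqrt_neg hh₁ hh₂⟩⟩
  · have hLUB := harmonicAntisphere.isLUB_linear_fin_two hh₁ hh₂
    rw [harmonicAntisphere.image_linear_fin_two] at hLUB
    exact hLUB.csSup_eq hLUB.nonempty
  · obtain ⟨hx, hy, hxy⟩ := harmonicAntisphere.mem_fin_two_iff.1
      (harmonicAntisphere.vec_sqrt_div_add_one_mem h₁_neg h₂_neg)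
    exact ⟨hx, hy, hxy, harmonicAntisphere.linear_sqrt_div_add_one h₁_neg h₂_neg⟩
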